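/- arXiv:1203.5135 — 2 statements merged into one kernel-verified Lean document; each statement's English description precedes it below -/
import Mathlib

section
/- (Single tree estimate.) Fix linearization data as in the context. Let (T, ξ_T, I_T) be any tree and let f_1, f_2, f_3 be measurable functions on [0,∞) for which the quantities below are finite. Then ∑_{P ∈ T} |I_P|^{-1/2} ∏_{i=1}^3 |⟨f_i, φ̃_{P_i}⟩| ≤ 4 |I_T| ∏_{i=1}^3 size_i(T, f_i). -/
open MeasureTheory Set
open scoped ENNReal

noncomputable section

/-- A dyadic interval `[n 2^k, (n+1) 2^k) ⊆ [0,∞)`. -/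
structure DyadicInterval where
  n : ℕ
  k : ℤ
  deriving DecidableEq

namespace DyadicInterval

/-- The length `2^k` of a dyadic interval. -/
def len (I : DyadicInterval) : ℝ := 2 ^ I.k

/-- The left endpoint `n 2^k` of a dyadic interval. -/
def lo (I : DyadicInterval) : ℝ := I.n * 2 ^ I.k

/-- A dyadic interval as a subset of `ℝ`. -/
def toSet (I : DyadicInterval) : Set ℝ := Set.Ico I.lo (I.lo + I.len)

end DyadicInterval

/-- The Walsh function of index `m` (Paley ordering): for `y ∈ [0,1)` with binary digits
`y_i`, `W_m(y) = (-1)^{∑ m_i y_i}`. -/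
def walshF (m : ℕ) (y : ℝ) : ℝ :=
  ∏ i ∈ Finset.range m, if m.testBit i then (-1 : ℝ) ^ ⌊y * 2 ^ (i + 1)⌋ else 1

/-- The Walsh wave packet of the rectangle `I × ω`.  For a tile (a rectangle of area one) this
is the unique family satisfying `φ_{I×[0,2^n)} = |I|^{-1/2} 1_I` together with the recursions
`φ_{I×ω_r} = (φ_{I_l×ω} − φ_{I_r×ω})/√2` and `φ_{I×ω_l} = (φ_{I_l×ω} + φ_{I_r×ω})/√2`. -/
def wavePacket (I ω : DyadicInterval) (x : ℝ) : ℝ :=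
  I.toSet.indicator (fun x => I.len ^ (-(1 : ℝ) / 2) * walshF ω.n ((x - I.lo) / I.len)) x

/-- `⟨f, g⟩ = ∫_0^∞ f g`. -/
def innerF (f g : ℝ → ℝ) : ℝ := ∫ x in Set.Ici (0 : ℝ), f x * g x

/-- A tile: a dyadic rectangle of area one. -/
structure Tile where
  I : DyadicInterval
  ω : DyadicInterval
  area : I.k + ω.k = 0

/-- The Walsh wave packet of a tile. -/
def Tile.wp (p : Tile) : ℝ → ℝ := wavePacket p.I p.ω

/-- A tile as a subset of `[0,∞) × [0,∞)`. -/
def Tile.toSet (p : Tile) : Set (ℝ × ℝ) := p.I.toSet ×ˢ p.ω.toSet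

/-- A quartile: a dyadic rectangle of area four. -/
structure Quartile where
  I : DyadicInterval
  ω : DyadicInterval
  area : I.k + ω.k = 2

namespace Quartile

/-- The frequency interval `ω_{P_{i+1}}` (the `i`-th dyadic grandchild of `ω_P`, `i : Fin 4`,
in increasing order). -/
def freq (P : Quartile) (i : Fin 4) : DyadicInterval := ⟨4 * P.ω.n + i.val, P.ω.k - 2⟩

/-- The tile `P_{i+1} = I_P × ω_{P_{i+1}}` as a subset of the plane, for `i : Fin 4`. -/
def subtileSet (P : Quartile) (i : Fin 4) : Set (ℝ × ℝ) := P.I.toSet ×ˢ (P.freq i).toSet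

/-- The Walsh wave packet `φ_{P_{i+1}}` for `i : Fin 4`. -/
def wp (P : Quartile) (i : Fin 4) : ℝ → ℝ := wavePacket P.I (P.freq i)

end Quartile

instance : DecidableEq Quartile := fun P Q =>
  decidable_of_iff (P.I = Q.I ∧ P.ω = Q.ω) (by cases P; cases Q; simp)

/-- `(T, ξ, I_T)` is a tree: `ξ ∈ [0,∞)` and every `P ∈ T` has `I_P ⊆ I_T` and `ξ ∈ ω_P`. -/
def IsTree (T : Finset Quartile) (ξ : ℝ) (It : DyadicInterval) : Prop :=
  0 ≤ ξ ∧ ∀ P ∈ T, P.I.toSet ⊆ It.toSet ∧ ξ ∈ P.ω.toSet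

/-- An `i`-overlapping tree (`i : Fin 4` indexes `P_1,…,P_4`): `ξ_T ∈ ω_{P_{i+1}}` for all `P`. -/
def IsOverlapping (i : Fin 4) (T : Finset Quartile) (ξ : ℝ) (It : DyadicInterval) : Prop :=
  IsTree T ξ It ∧ ∀ P ∈ T, ξ ∈ (P.freq i).toSet

/-- An `i`-lacunary tree: `j`-overlapping for some `j ≠ i`. -/
def IsLacunary (i : Fin 4) (T : Finset Quartile) (ξ : ℝ) (It : DyadicInterval) : Prop :=
  ∃ j, j ≠ i ∧ IsOverlapping j T ξ It

/-- `ω_T`: the dyadic interval of length `|I_T|⁻¹` containing `ξ`; `p_T = I_T × ω_T`. -/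
def topFreq (It : DyadicInterval) (ξ : ℝ) : DyadicInterval := ⟨(⌊ξ * 2 ^ It.k⌋).toNat, -It.k⟩

/-- The dyadic interval of length `2^k` containing `x ≥ 0`. -/
def dyadicPiece (k : ℤ) (x : ℝ) : Set ℝ :=
  Set.Ico ((⌊x / 2 ^ k⌋ : ℝ) * 2 ^ k) (((⌊x / 2 ^ k⌋ : ℝ) + 1) * 2 ^ k)

/-- The dyadic averaging operator `A_k[f](x) = |I|⁻¹ ∫_I f` with `I ∋ x` dyadic, `|I| = 2^k`. -/
def dyadicAvg (k : ℤ) (f : ℝ → ℝ) (x : ℝ) : ℝ :=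
  ((2 : ℝ) ^ k)⁻¹ * ∫ y in dyadicPiece k x, f y

/-- The `r`-variation seminorm of `g : ℤ → ℝ` over the index set `S ⊆ ℤ`:
the supremum of `(∑_{j=1}^N |g(k_j) − g(k_{j−1})|^r)^{1/r}` over finite increasing
sequences `k_0 < ⋯ < k_N` in `S`. -/
def varNorm (r : ℝ) (S : Set ℤ) (g : ℤ → ℝ) : ℝ≥0∞ :=
  ⨆ (N : ℕ) (k : ℕ → ℤ) (_ : StrictMono k) (_ : ∀ j ≤ N, k j ∈ S),
    (∑ j ∈ Finset.range N, ENNReal.ofReal (|g (k (j + 1)) - g (k j)| ^ r)) ^ (1 / r)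

/-- The dyadic `L^t` Hardy–Littlewood maximal operator `M^t[f](x) = sup_k (A_k[|f|^t](x))^{1/t}`. -/
def maxOp (t : ℝ) (f : ℝ → ℝ) (x : ℝ) : ℝ≥0∞ :=
  ⨆ k : ℤ, ((ENNReal.ofReal ((2 : ℝ) ^ k))⁻¹ *
    ∫⁻ y in dyadicPiece k x, ENNReal.ofReal (|f y| ^ t)) ^ (1 / t)

/-- Given a strictly increasing `kk : ℤ → ℤ` and coefficients `a : ℤ → ℝ`, the coefficient
`a_m` where `m` is the (unique) integer with `kk (m-1) ≤ K < kk m` (`K = log₂|I_P|`),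
and `0` if no such `m` exists. -/
def linCoeff (kk : ℤ → ℤ) (a : ℤ → ℝ) (K : ℤ) : ℝ :=
  letI := Classical.propDecidable (∃ m : ℤ, kk (m - 1) ≤ K ∧ K < kk m)
  if h : ∃ m : ℤ, kk (m - 1) ≤ K ∧ K < kk m then a h.choose else 0

/-- Linearization data for the `r`-variation: measurably in `x`, a strictly increasing
sequence of integers `k_j(x)` and coefficients `a_j(x)` with `∑_j |a_j(x)|^{r'} ≤ 1`,
`r' = r/(r-1)`. -/
structure LinData (r : ℝ) where
  kseq : ℝ → ℤ → ℤ
  aseq : ℝ → ℤ → ℝ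
  mono : ∀ x, StrictMono (kseq x)
  meas_k : ∀ j, Measurable fun x => kseq x j
  meas_a : ∀ j, Measurable fun x => aseq x j
  abound : ∀ x, ∀ s : Finset ℤ, ∑ j ∈ s, |aseq x j| ^ (r / (r - 1)) ≤ 1

/-- `a_P(x)` for a quartile `P`. -/
def LinData.coeff {r : ℝ} (L : LinData r) (P : Quartile) (x : ℝ) : ℝ :=
  linCoeff (L.kseq x) (L.aseq x) P.I.k

/-- The modified wave packets: `φ̃_{P_3}(x) = a_P(x) φ_{P_3}(x)` and `φ̃_{P_i} = φ_{P_i}`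
for `i ≠ 3` (here `i : Fin 4`, so index `2` plays the role of `3`). -/
def LinData.wp {r : ℝ} (L : LinData r) (P : Quartile) (i : Fin 4) (x : ℝ) : ℝ :=
  (if i = (2 : Fin 4) then L.coeff P x else 1) * P.wp i x

/-- `size_i(Ps, f)`: the sup of `(|I_T|⁻¹ ∑_{P ∈ T} |⟨f, φ̃_{P_i}⟩|²)^{1/2}` over
`i`-lacunary trees `T ⊆ Ps`. -/
def treeSize {r : ℝ} (L : LinData r) (i : Fin 4) (Ps : Set Quartile) (f : ℝ → ℝ) : ℝ≥0∞ :=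
  ⨆ (T : Finset Quartile) (ξ : ℝ) (It : DyadicInterval)
    (_ : IsLacunary i T ξ It) (_ : (T : Set Quartile) ⊆ Ps),
    ENNReal.ofReal ((It.len)⁻¹ * ∑ P ∈ T, innerF f (L.wp P i) ^ 2) ^ ((1 : ℝ) / 2)

/-- Lebesgue measure restricted to `[0,∞)`. -/
def mu0 : Measure ℝ := volume.restrict (Set.Ici 0)

end

/-!
Split the tree `T` into four subtrees `T_j` according to which grandchild `ω_{P_j}` contains `ξ_T`.
The tree `T_j` is `j`-overlapping, hence `i`-lacunary for every `i ≠ j`; so at least two of any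
three distinct indices are lacunary for it. Cauchy–Schwarz controls the sum over `T_j` of the
product of the two corresponding factors by `|I_T|` times the product of their sizes. The third
factor, weighted by `|I_P|^{-1/2}`, is at most its size term by term, since each `{P}` is itself a
lacunary tree with top interval `I_P`. Summing over `j` produces the factor `4`.
-/

namespace DyadicInterval

variable (I : DyadicInterval)

theorem len_pos : 0 < I.len := zpow_pos two_pos _

theorem lo_nonneg : 0 ≤ I.lo := mul_nonneg (Nat.cast_nonneg _) I.len_pos.le

theorem lo_mem_toSet : I.lo ∈ I.toSet := ⟨le_rfl, lt_add_of_pos_right _ I.len_pos⟩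

theorem mem_toSet_iff_floor_eq {x : ℝ} : x ∈ I.toSet ↔ ⌊x / 2 ^ I.k⌋ = I.n := by
  have hk : (0 : ℝ) < 2 ^ I.k := I.len_pos
  rw [Int.floor_eq_iff, le_div_iff₀ hk, div_lt_iff₀ hk, add_one_mul]
  rfl

end DyadicInterval

namespace Quartile

variable (P : Quartile)

theorem iUnion_freq_toSet : ⋃ j, (P.freq j).toSet = P.ω.toSet := by
  ext x
  have floor_eq : ⌊x / 2 ^ P.ω.k⌋ = ⌊x / 2 ^ (P.ω.k - 2)⌋ / 4 := by
    have hscale : (2 : ℝ) ^ P.ω.k = 2 ^ (P.ω.k - 2) * (4 : ℕ) := by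
      rw [zpow_sub₀ two_ne_zero]; norm_num
    rw [hscale, ← div_div, Int.floor_div_natCast, Nat.cast_ofNat]
  simp only [mem_iUnion, DyadicInterval.mem_toSet_iff_floor_eq, floor_eq, freq]
  constructor
  · rintro ⟨j, hj⟩
    omega
  · intro hx
    refine ⟨⟨(⌊x / 2 ^ (P.ω.k - 2)⌋ % 4).toNat, by omega⟩, ?_⟩
    push_cast
    omega

theorem exists_isLacunary_singleton (i : Fin 4) : ∃ ξ, IsLacunary i {P} ξ P.I := by
  obtain ⟨j, hji⟩ := exists_ne i
  have hfreq : (P.freq j).lo ∈ (P.freq j).toSet := (P.freq j).lo_mem_toSet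
  have hω : (P.freq j).lo ∈ P.ω.toSet := P.iUnion_freq_toSet ▸ mem_iUnion_of_mem j hfreq
  refine ⟨(P.freq j).lo, j, hji, ⟨(P.freq j).lo_nonneg, ?_⟩, ?_⟩
  · simpa using hω
  · simpa using hfreq

end Quartile

theorem IsTree.mono {T T' : Finset Quartile} {ξ : ℝ} {It : DyadicInterval}
    (hT : IsTree T ξ It) (h : T' ⊆ T) : IsTree T' ξ It :=
  ⟨hT.1, fun P hP => hT.2 P (h hP)⟩

/-- The size of a family of coefficients `c`: the quantity `treeSize` with arbitrary numbers `c P`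
in place of the wave packet coefficients `⟨f, φ̃_{P_i}⟩`. -/
noncomputable def coeffSize (i : Fin 4) (Ps : Set Quartile) (c : Quartile → ℝ) : ℝ≥0∞ :=
  ⨆ (T : Finset Quartile) (ξ : ℝ) (It : DyadicInterval)
    (_ : IsLacunary i T ξ It) (_ : (T : Set Quartile) ⊆ Ps),
    ENNReal.ofReal (It.len⁻¹ * ∑ P ∈ T, c P ^ 2) ^ ((1 : ℝ) / 2)

theorem treeSize_eq_coeffSize {r : ℝ} (L : LinData r) (i : Fin 4) (Ps : Set Quartile)
    (f : ℝ → ℝ) : treeSize L i Ps f = coeffSize i Ps fun P => innerF f (L.wp P i) :=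
  rfl

section CoeffSize

variable {i i₁ i₂ i₃ j : Fin 4} {T : Finset Quartile} {Ps : Set Quartile} {ξ : ℝ}
  {It : DyadicInterval}

theorem IsLacunary.ofReal_inv_len_mul_sum_sq_le (h : IsLacunary i T ξ It)
    (hT : (T : Set Quartile) ⊆ Ps) (c : Quartile → ℝ) :
    ENNReal.ofReal (It.len⁻¹ * ∑ P ∈ T, c P ^ 2) ≤ coeffSize i Ps c ^ 2 := by
  have hsqrt : ENNReal.ofReal (It.len⁻¹ * ∑ P ∈ T, c P ^ 2) ^ ((1 : ℝ) / 2) ≤ coeffSize i Ps c :=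
    le_iSup_of_le T <| le_iSup_of_le ξ <| le_iSup_of_le It <| le_iSup₂_of_le h hT le_rfl
  rwa [one_div, ENNReal.rpow_inv_le_iff two_pos, ENNReal.rpow_two] at hsqrt

theorem IsLacunary.sum_enorm_sq_le (h : IsLacunary i T ξ It)
    (hT : (T : Set Quartile) ⊆ Ps) (c : Quartile → ℝ) :
    ∑ P ∈ T, ‖c P‖ₑ ^ 2 ≤ ENNReal.ofReal It.len * coeffSize i Ps c ^ 2 :=
  calc ∑ P ∈ T, ‖c P‖ₑ ^ 2 = ENNReal.ofReal (∑ P ∈ T, c P ^ 2) := by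
        rw [ENNReal.ofReal_sum_of_nonneg fun _ _ => sq_nonneg _]
        simp only [Real.enorm_eq_ofReal_abs, ← ENNReal.ofReal_pow (abs_nonneg _), sq_abs]
    _ = ENNReal.ofReal It.len * ENNReal.ofReal (It.len⁻¹ * ∑ P ∈ T, c P ^ 2) := by
        rw [← ENNReal.ofReal_mul It.len_pos.le, mul_inv_cancel_left₀ It.len_pos.ne']
    _ ≤ ENNReal.ofReal It.len * coeffSize i Ps c ^ 2 := by
        gcongr
        exact h.ofReal_inv_len_mul_sum_sq_le hT c

theorem ofReal_len_rpow_mul_enorm_le_coeffSize {P : Quartile} (hP : P ∈ Ps) (i : Fin 4)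
    (c : Quartile → ℝ) :
    ENNReal.ofReal (P.I.len ^ (-(1 : ℝ) / 2)) * ‖c P‖ₑ ≤ coeffSize i Ps c := by
  obtain ⟨ξ, hlac⟩ := P.exists_isLacunary_singleton i
  have hlen : (P.I.len ^ (-(1 : ℝ) / 2)) ^ 2 = P.I.len⁻¹ := by
    rw [← Real.rpow_mul_natCast P.I.len_pos.le, ← Real.rpow_neg_one]
    norm_num
  rw [← ENNReal.pow_le_pow_left_iff two_ne_zero]
  calc (ENNReal.ofReal (P.I.len ^ (-(1 : ℝ) / 2)) * ‖c P‖ₑ) ^ 2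
      = ENNReal.ofReal (P.I.len⁻¹ * ∑ Q ∈ {P}, c Q ^ 2) := by
        have hweight : 0 ≤ P.I.len ^ (-(1 : ℝ) / 2) := Real.rpow_nonneg P.I.len_pos.le _
        rw [Real.enorm_eq_ofReal_abs, ← ENNReal.ofReal_mul hweight,
          ← ENNReal.ofReal_pow (mul_nonneg hweight (abs_nonneg _)), mul_pow, hlen, sq_abs,
          Finset.sum_singleton]
    _ ≤ coeffSize i Ps c ^ 2 := hlac.ofReal_inv_len_mul_sum_sq_le (by simpa using hP) c

theorem ennreal_sum_mul_sq_le_sq_mul_sq {ι : Type*} (s : Finset ι) (f g : ι → ℝ≥0∞) :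
    (∑ x ∈ s, f x * g x) ^ 2 ≤ (∑ x ∈ s, f x ^ 2) * ∑ x ∈ s, g x ^ 2 := by
  have hHölder := ENNReal.inner_le_Lp_mul_Lq s f g Real.HolderConjugate.two_two
  simp only [ENNReal.rpow_two] at hHölder
  rwa [← ENNReal.mul_rpow_of_nonneg _ _ (by norm_num), one_div,
    ENNReal.le_rpow_inv_iff two_pos, ENNReal.rpow_two] at hHölder

theorem IsLacunary.sum_enorm_mul_enorm_le (h₁ : IsLacunary i₁ T ξ It) (h₂ : IsLacunary i₂ T ξ It)
    (hT : (T : Set Quartile) ⊆ Ps) (c₁ c₂ : Quartile → ℝ) :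
    ∑ P ∈ T, ‖c₁ P‖ₑ * ‖c₂ P‖ₑ ≤
      ENNReal.ofReal It.len * (coeffSize i₁ Ps c₁ * coeffSize i₂ Ps c₂) := by
  rw [← ENNReal.pow_le_pow_left_iff two_ne_zero]
  calc (∑ P ∈ T, ‖c₁ P‖ₑ * ‖c₂ P‖ₑ) ^ 2
      ≤ (∑ P ∈ T, ‖c₁ P‖ₑ ^ 2) * ∑ P ∈ T, ‖c₂ P‖ₑ ^ 2 := ennreal_sum_mul_sq_le_sq_mul_sq ..
    _ ≤ (ENNReal.ofReal It.len * coeffSize i₁ Ps c₁ ^ 2) *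
          (ENNReal.ofReal It.len * coeffSize i₂ Ps c₂ ^ 2) :=
        mul_le_mul' (h₁.sum_enorm_sq_le hT c₁) (h₂.sum_enorm_sq_le hT c₂)
    _ = (ENNReal.ofReal It.len * (coeffSize i₁ Ps c₁ * coeffSize i₂ Ps c₂)) ^ 2 := by ring

theorem IsLacunary.sum_enorm_mul_enorm_mul_enorm_le (h₁ : IsLacunary i₁ T ξ It)
    (h₂ : IsLacunary i₂ T ξ It) (hT : (T : Set Quartile) ⊆ Ps) (i₃ : Fin 4)
    (c₁ c₂ c₃ : Quartile → ℝ) :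
    ∑ P ∈ T, ENNReal.ofReal (P.I.len ^ (-(1 : ℝ) / 2)) * (‖c₁ P‖ₑ * ‖c₂ P‖ₑ * ‖c₃ P‖ₑ) ≤
      ENNReal.ofReal It.len * (coeffSize i₁ Ps c₁ * coeffSize i₂ Ps c₂ * coeffSize i₃ Ps c₃) :=
  calc ∑ P ∈ T, ENNReal.ofReal (P.I.len ^ (-(1 : ℝ) / 2)) * (‖c₁ P‖ₑ * ‖c₂ P‖ₑ * ‖c₃ P‖ₑ)
      ≤ ∑ P ∈ T, ‖c₁ P‖ₑ * ‖c₂ P‖ₑ * coeffSize i₃ Ps c₃ := by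
        refine Finset.sum_le_sum fun P hP => ?_
        rw [mul_left_comm]
        gcongr
        exact ofReal_len_rpow_mul_enorm_le_coeffSize (hT hP) i₃ c₃
    _ = (∑ P ∈ T, ‖c₁ P‖ₑ * ‖c₂ P‖ₑ) * coeffSize i₃ Ps c₃ := (Finset.sum_mul ..).symm
    _ ≤ ENNReal.ofReal It.len * (coeffSize i₁ Ps c₁ * coeffSize i₂ Ps c₂) *
          coeffSize i₃ Ps c₃ := by
        gcongr
        exact h₁.sum_enorm_mul_enorm_le h₂ hT c₁ c₂
    _ = ENNReal.ofReal It.len *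
          (coeffSize i₁ Ps c₁ * coeffSize i₂ Ps c₂ * coeffSize i₃ Ps c₃) := mul_assoc ..

theorem IsOverlapping.sum_enorm_mul_enorm_mul_enorm_le (h : IsOverlapping j T ξ It)
    (hT : (T : Set Quartile) ⊆ Ps) (h₁₂ : i₁ ≠ i₂) (h₁₃ : i₁ ≠ i₃) (h₂₃ : i₂ ≠ i₃)
    (c₁ c₂ c₃ : Quartile → ℝ) :
    ∑ P ∈ T, ENNReal.ofReal (P.I.len ^ (-(1 : ℝ) / 2)) * (‖c₁ P‖ₑ * ‖c₂ P‖ₑ * ‖c₃ P‖ₑ) ≤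
      ENNReal.ofReal It.len * (coeffSize i₁ Ps c₁ * coeffSize i₂ Ps c₂ * coeffSize i₃ Ps c₃) := by
  have lacunary {i : Fin 4} (hji : j ≠ i) : IsLacunary i T ξ It := ⟨j, hji, h⟩
  rcases eq_or_ne j i₁ with rfl | hj₁
  · simpa only [mul_comm, mul_left_comm] using
      (lacunary h₁₂).sum_enorm_mul_enorm_mul_enorm_le (lacunary h₁₃) hT j c₂ c₃ c₁
  rcases eq_or_ne j i₂ with rfl | hj₂
  · simpa only [mul_right_comm] using
      (lacunary hj₁).sum_enorm_mul_enorm_mul_enorm_le (lacunary h₂₃) hT j c₁ c₃ c₂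
  · exact (lacunary hj₁).sum_enorm_mul_enorm_mul_enorm_le (lacunary hj₂) hT i₃ c₁ c₂ c₃

theorem IsTree.sum_enorm_mul_enorm_mul_enorm_le (hT : IsTree T ξ It)
    (h₁₂ : i₁ ≠ i₂) (h₁₃ : i₁ ≠ i₃) (h₂₃ : i₂ ≠ i₃) (c₁ c₂ c₃ : Quartile → ℝ) :
    ∑ P ∈ T, ENNReal.ofReal (P.I.len ^ (-(1 : ℝ) / 2)) * (‖c₁ P‖ₑ * ‖c₂ P‖ₑ * ‖c₃ P‖ₑ) ≤
      4 * (ENNReal.ofReal It.len *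
        (coeffSize i₁ T c₁ * coeffSize i₂ T c₂ * coeffSize i₃ T c₃)) := by
  have hcover : ∀ P ∈ T, ∃ j, ξ ∈ (P.freq j).toSet := fun P hP => by
    simpa only [← P.iUnion_freq_toSet, mem_iUnion] using (hT.2 P hP).2
  choose! j hj using hcover
  have overlapping (m : Fin 4) : IsOverlapping m {P ∈ T | j P = m} ξ It := by
    refine ⟨hT.mono (Finset.filter_subset _ _), fun P hP => ?_⟩
    obtain ⟨hPT, rfl⟩ := Finset.mem_filter.1 hP
    exact hj P hPT
  rw [← Finset.sum_fiberwise T j]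
  refine (Finset.sum_le_card_nsmul _ _ _ fun m _ =>
    (overlapping m).sum_enorm_mul_enorm_mul_enorm_le
      (Finset.coe_subset.2 (Finset.filter_subset _ _)) h₁₂ h₁₃ h₂₃ c₁ c₂ c₃).trans_eq ?_
  rw [Finset.card_univ, Fintype.card_fin, nsmul_eq_mul, Nat.cast_ofNat]

theorem single_tree_estimate_general (hT : IsTree T ξ It)
    (h₁₂ : i₁ ≠ i₂) (h₁₃ : i₁ ≠ i₃) (h₂₃ : i₂ ≠ i₃) (c₁ c₂ c₃ : Quartile → ℝ) :
    ENNReal.ofReal (∑ P ∈ T, P.I.len ^ (-(1 : ℝ) / 2) * (|c₁ P| * |c₂ P| * |c₃ P|)) ≤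
      ENNReal.ofReal (4 * It.len) *
        (coeffSize i₁ T c₁ * coeffSize i₂ T c₂ * coeffSize i₃ T c₃) := by
  have hweight (P : Quartile) : 0 ≤ P.I.len ^ (-(1 : ℝ) / 2) := Real.rpow_nonneg P.I.len_pos.le _
  rw [ENNReal.ofReal_sum_of_nonneg fun P _ => mul_nonneg (hweight P) (by positivity),
    ENNReal.ofReal_mul zero_le_four, ENNReal.ofReal_ofNat, mul_assoc]
  simpa only [ENNReal.ofReal_mul (hweight _), ENNReal.ofReal_mul (abs_nonneg _),
    ENNReal.ofReal_mul (mul_nonneg (abs_nonneg _) (abs_nonneg _)), Real.enorm_eq_ofReal_abs]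
    using hT.sum_enorm_mul_enorm_mul_enorm_le h₁₂ h₁₃ h₂₃ c₁ c₂ c₃

end CoeffSize

/-- **Equation (6.5) (single tree estimate).** For any tree `T` and functions `f₁, f₂, f₃`:
`∑_{P ∈ T} |I_P|^{-1/2} ∏_i |⟨f_i, φ̃_{P_i}⟩| ≤ 4 |I_T| ∏_i size_i(T, f_i)`. -/
theorem single_tree_estimate (r : ℝ) (hr : 2 < r) (L : LinData r)
    (T : Finset Quartile) (ξ : ℝ) (It : DyadicInterval) (hT : IsTree T ξ It)
    (f1 f2 f3 : ℝ → ℝ) :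
    ENNReal.ofReal (∑ P ∈ T, P.I.len ^ (-(1 : ℝ) / 2) *
        (|innerF f1 (L.wp P 0)| * |innerF f2 (L.wp P 1)| * |innerF f3 (L.wp P 2)|))
      ≤ ENNReal.ofReal (4 * It.len) *
          (treeSize L 0 ↑T f1 * treeSize L 1 ↑T f2 * treeSize L 2 ↑T f3) := by
  simp only [treeSize_eq_coeffSize]
  exact single_tree_estimate_general hT (by decide) (by decide) (by decide) _ _ _
end

section
/- (Linearization of the variation norm.) Let r > 2 with conjugate exponent r' = r/(r−1), let 𝐏̄ be a finite collection of quartiles, let f_1, f_2 be real-valued integrable functions on [0,∞), and let x ∈ [0,∞). Then there exist a strictly increasing sequence of integers (k_j)_{j∈ℤ} and a real sequence (a_j)_{j∈ℤ} with ∑_{j∈ℤ} |a_j|^{r'} ≤ 1 such that, setting a_P = a_m when m is the unique integer with 2^{k_{m−1}} ≤ |I_P| < 2^{k_m} and a_P = 0 when no such m exists, one has ∑_{P ∈ 𝐏̄} |I_P|^{-1/2} ⟨f_1, φ_{P_1}⟩ ⟨f_2, φ_{P_2}⟩ φ_{P_3}(x) a_P ≥ (1/2) ‖ ∑_{P ∈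 𝐏̄ : |I_P| ≥ 2^k} |I_P|^{-1/2} ⟨f_1, φ_{P_1}⟩ ⟨f_2, φ_{P_2}⟩ φ_{P_3}(x) ‖_{V^r_k}. -/
open MeasureTheory Set
open scoped ENNReal

/-! Only finitely many values compete in the supremum defining the variation norm of the truncated
sums: the increment over a gap `k_j < k_{j+1}` is, up to sign, the sum over the block of terms of
scale in `[k_j, k_{j+1})`, the nonempty blocks of one sequence are distinct, and there are finitely
many families of subsets of the index set. So the supremum is attained, at some sequence, and
`ℓ^r`–`ℓ^{r'}` duality applied to its increments produces the coefficients. -/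

lemma exists_sum_mul_eq_rpow_sum_abs_rpow {ι : Type*} {p q : ℝ} (hpq : p.HolderConjugate q)
    (s : Finset ι) (e : ι → ℝ) :
    ∃ a : ι → ℝ, (∀ j ∉ s, a j = 0) ∧ (∀ t : Finset ι, ∑ j ∈ t, |a j| ^ q ≤ 1) ∧
      ∑ j ∈ s, e j * a j = (∑ j ∈ s, |e j| ^ p) ^ (1 / p) := by
  classical
  obtain ⟨b, hb, hb_pairing⟩ := (NNReal.isGreatest_Lp s (fun j => ‖e j‖₊) hpq).1
  have abs_sign_mul_le (j : ι) : |SignType.sign (e j) * (b j : ℝ)| ≤ b j := by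
    rcases lt_trichotomy (e j) 0 with h | h | h <;> simp [h]
  refine ⟨fun j => if j ∈ s then SignType.sign (e j) * (b j : ℝ) else 0,
    fun j hj => if_neg hj, fun t => ?_, ?_⟩
  · calc ∑ j ∈ t, |if j ∈ s then SignType.sign (e j) * (b j : ℝ) else 0| ^ q
        ≤ ∑ j ∈ t, if j ∈ s then (b j : ℝ) ^ q else 0 := by
          refine Finset.sum_le_sum fun j _ => ?_
          split_ifs
          · exact Real.rpow_le_rpow (abs_nonneg _) (abs_sign_mul_le j) hpq.symm.nonneg
          · rw [abs_zero, Real.zero_rpow hpq.symm.ne_zero]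
      _ = ∑ j ∈ t ∩ s, (b j : ℝ) ^ q := Finset.sum_ite_mem t s _
      _ ≤ ∑ j ∈ s, (b j : ℝ) ^ q :=
          Finset.sum_le_sum_of_subset_of_nonneg Finset.inter_subset_right
            fun _ _ _ => by positivity
      _ ≤ 1 := by exact_mod_cast hb
  · calc ∑ j ∈ s, e j * (if j ∈ s then SignType.sign (e j) * (b j : ℝ) else 0)
        = ∑ j ∈ s, |e j| * b j := by
          refine Finset.sum_congr rfl fun j hj => ?_
          rw [if_pos hj, ← mul_assoc, self_mul_sign]
      _ = (∑ j ∈ s, |e j| ^ p) ^ (1 / p) := by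
          simpa using congrArg NNReal.toReal hb_pairing

lemma exists_strictMono_int_extension {α : Type*} [Preorder α] [NoMinOrder α] {k : ℕ → α}
    (hk : StrictMono k) : ∃ kk : ℤ → α, StrictMono kk ∧ ∀ n : ℕ, kk n = k n := by
  obtain ⟨l, hl, hl_zero⟩ := Nat.exists_strictAnti' (k 0)
  refine ⟨fun j => Int.casesOn j k fun n => l (n + 1), strictMono_int_of_lt_succ ?_, fun _ => rfl⟩
  rintro (n | _ | n)
  · exact hk n.lt_succ_self
  · exact (hl Nat.zero_lt_one).trans_eq hl_zero
  · exact hl (Nat.lt_succ_self _)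

section LinCoeff

variable {kk : ℤ → ℤ} {a : ℤ → ℝ} {K : ℤ}

lemma eq_of_mem_Ico_sub_one (hkk : Monotone kk) {m n : ℤ} (hm : K ∈ Ico (kk (m - 1)) (kk m))
    (hn : K ∈ Ico (kk (n - 1)) (kk n)) : m = n :=
  hkk.pairwise_disjoint_on_Ico_pred.eq (Set.not_disjoint_iff.2 ⟨K, hm, hn⟩)

lemma linCoeff_of_mem (hkk : Monotone kk) {m : ℤ} (hm : K ∈ Ico (kk (m - 1)) (kk m)) :
    linCoeff kk a K = a m := by
  have hex : ∃ m : ℤ, kk (m - 1) ≤ K ∧ K < kk m := ⟨m, hm⟩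
  rw [linCoeff, dif_pos hex, eq_of_mem_Ico_sub_one hkk hex.choose_spec hm]

lemma linCoeff_eq_zero (h : ∀ m, K ∈ Ico (kk (m - 1)) (kk m) → a m = 0) :
    linCoeff kk a K = 0 := by
  rw [linCoeff]
  split_ifs with hex
  · exact h _ hex.choose_spec
  · rfl

lemma linCoeff_eq_sum (hkk : Monotone kk) {t : Finset ℤ} (ha : ∀ m ∉ t, a m = 0) (K : ℤ) :
    linCoeff kk a K = ∑ m ∈ t, if K ∈ Ico (kk (m - 1)) (kk m) then a m else 0 := by
  by_cases hK : ∃ m ∈ t, K ∈ Ico (kk (m - 1)) (kk m)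
  · obtain ⟨m, hmt, hm⟩ := hK
    rw [Finset.sum_eq_single_of_mem m hmt, if_pos hm, linCoeff_of_mem hkk hm]
    exact fun n _ hnm => if_neg fun hn => hnm (eq_of_mem_Ico_sub_one hkk hn hm)
  · push Not at hK
    rw [Finset.sum_eq_zero fun m hm => if_neg (hK m hm)]
    exact linCoeff_eq_zero fun m hm => ha m fun hmt => hK m hmt hm

end LinCoeff

section TruncatedSum

variable {ι β M : Type*} [LinearOrder β]

/-- The sum of the terms `c i` of scale `κ i` at least `m`: the truncation at scale `2 ^ m` of a
sum over quartiles when `κ` is the exponent of the length of the time interval. -/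
def truncatedSum [AddCommMonoid M] (s : Finset ι) (κ : ι → β) (c : ι → M) (m : β) : M :=
  ∑ i ∈ s with m ≤ κ i, c i

lemma truncatedSum_sub_truncatedSum [AddCommGroup M] (s : Finset ι) (κ : ι → β) (c : ι → M)
    {l m : β} (hlm : l ≤ m) :
    truncatedSum s κ c l - truncatedSum s κ c m = ∑ i ∈ s with κ i ∈ Ico l m, c i := by
  simp only [truncatedSum, Finset.sum_filter, ← Finset.sum_sub_distrib]
  refine Finset.sum_congr rfl fun i _ => ?_
  by_cases hm : m ≤ κ i
  · simp [hm, hlm.trans hm]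
  · simp [hm, not_le.1 hm]

lemma sum_mul_linCoeff {kk : ℤ → ℤ} {a : ℤ → ℝ} (hkk : Monotone kk)
    {t : Finset ℤ} (ha : ∀ m ∉ t, a m = 0) (s : Finset ι) (κ : ι → ℤ) (c : ι → ℝ) :
    ∑ i ∈ s, c i * linCoeff kk a (κ i) =
      ∑ m ∈ t, (truncatedSum s κ c (kk (m - 1)) - truncatedSum s κ c (kk m)) * a m := by
  simp only [linCoeff_eq_sum hkk ha, Finset.mul_sum, mul_ite, mul_zero]
  rw [Finset.sum_comm]
  refine Finset.sum_congr rfl fun m _ => ?_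
  rw [truncatedSum_sub_truncatedSum s κ c (hkk (sub_one_lt m).le), Finset.sum_mul,
    Finset.sum_filter]

end TruncatedSum

section Variation

variable {ι β : Type*} {r : ℝ}

/-- The `ℓ^r` norm of the first `N` increments of `g` along the sequence `k`; the variation norm
is the supremum of these over increasing `k` and all `N`. -/
noncomputable def variationAlong (r : ℝ) (g : β → ℝ) (k : ℕ → β) (N : ℕ) : ℝ :=
  (∑ j ∈ Finset.range N, |g (k (j + 1)) - g (k j)| ^ r) ^ (1 / r)

lemma variationAlong_nonneg (r : ℝ) (g : β → ℝ) (k : ℕ → β) (N : ℕ) :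
    0 ≤ variationAlong r g k N := by
  unfold variationAlong
  positivity

lemma varNorm_univ_eq_iSup (hr : 0 ≤ r) (g : ℤ → ℝ) :
    varNorm r univ g =
      ⨆ p : ℕ × {k : ℕ → ℤ // StrictMono k}, ENNReal.ofReal (variationAlong r g p.2 p.1) := by
  have ofReal_variationAlong (k : ℕ → ℤ) (N : ℕ) : ENNReal.ofReal (variationAlong r g k N) =
      (∑ j ∈ Finset.range N, ENNReal.ofReal (|g (k (j + 1)) - g (k j)| ^ r)) ^ (1 / r) := by
    rw [variationAlong, ← ENNReal.ofReal_rpow_of_nonneg (by positivity) (by positivity),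
      ENNReal.ofReal_sum_of_nonneg fun _ _ => by positivity]
  simp only [varNorm, iSup_prod, iSup_subtype, ofReal_variationAlong, mem_univ, implies_true,
    iSup_pos]

variable [LinearOrder β]

lemma variationAlong_truncatedSum [DecidableEq ι] (hr : r ≠ 0) (s : Finset ι) (κ : ι → β)
    (c : ι → ℝ) {k : ℕ → β} (hk : Monotone k) (N : ℕ) :
    variationAlong r (truncatedSum s κ c) k N =
      (∑ B ∈ (Finset.range N).image fun j => {i ∈ s | κ i ∈ Ico (k j) (k (j + 1))},
        |∑ i ∈ B, c i| ^ r) ^ (1 / r) := by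
  rw [variationAlong, Finset.sum_image_of_disjoint (by simp [hr])]
  · simp only [abs_sub_comm (truncatedSum s κ c (k (_ + 1))),
      truncatedSum_sub_truncatedSum s κ c (hk (Nat.le_succ _))]
  · refine fun j _ l _ hjl => Finset.disjoint_filter.2 fun i _ hj hl => ?_
    exact Set.disjoint_left.1 (hk.pairwise_disjoint_on_Ico_succ hjl) hj hl

lemma finite_setOf_variationAlong_truncatedSum (hr : r ≠ 0) (s : Finset ι) (κ : ι → β)
    (c : ι → ℝ) :
    {v | ∃ (N : ℕ) (k : ℕ → β), Monotone k ∧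
      variationAlong r (truncatedSum s κ c) k N = v}.Finite := by
  classical
  let familyNorm (𝓑 : Finset (Finset ι)) : ℝ := (∑ B ∈ 𝓑, |∑ i ∈ B, c i| ^ r) ^ (1 / r)
  refine (s.powerset.powerset.finite_toSet.image familyNorm).subset ?_
  rintro _ ⟨N, k, hk, rfl⟩
  refine ⟨_, ?_, (variationAlong_truncatedSum hr s κ c hk N).symm⟩
  exact Finset.mem_powerset.2 <| Finset.image_subset_iff.2 fun _ _ =>
    Finset.mem_powerset.2 <| Finset.filter_subset _ _

lemma exists_varNorm_truncatedSum_eq (hr : 0 < r) (s : Finset ι) (κ : ι → ℤ) (c : ι → ℝ) :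
    ∃ (N : ℕ) (k : ℕ → ℤ), StrictMono k ∧ varNorm r univ (truncatedSum s κ c) =
      ENNReal.ofReal (variationAlong r (truncatedSum s κ c) k N) := by
  let value (p : ℕ × {k : ℕ → ℤ // StrictMono k}) : ℝ≥0∞ :=
    ENNReal.ofReal (variationAlong r (truncatedSum s κ c) p.2 p.1)
  have finite_range_value : (range value).Finite := by
    refine ((finite_setOf_variationAlong_truncatedSum hr.ne' s κ c).image ENNReal.ofReal).subset ?_
    rintro _ ⟨⟨N, k, hk⟩, rfl⟩
    exact mem_image_of_mem _ ⟨N, k, hk.monotone, rfl⟩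
  have : Nonempty {k : ℕ → ℤ // StrictMono k} := ⟨_, Nat.strictMono_cast⟩
  obtain ⟨⟨N, k, hk⟩, hmax⟩ := (range_nonempty value).csSup_mem finite_range_value
  exact ⟨N, k, hk, (varNorm_univ_eq_iSup hr.le _).trans hmax.symm⟩

end Variation

lemma exists_sum_mul_linCoeff_eq_variationAlong {ι : Type*} {p q : ℝ} (hpq : p.HolderConjugate q)
    (s : Finset ι) (κ : ι → ℤ) (c : ι → ℝ) {k : ℕ → ℤ} (hk : StrictMono k) (N : ℕ) :
    ∃ (kk : ℤ → ℤ) (a : ℤ → ℝ), StrictMono kk ∧ (∀ t : Finset ℤ, ∑ j ∈ t, |a j| ^ q ≤ 1) ∧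
      ∑ i ∈ s, c i * linCoeff kk a (κ i) = variationAlong p (truncatedSum s κ c) k N := by
  obtain ⟨kk, hkk, hkk_eq⟩ := exists_strictMono_int_extension hk
  let gaps : Finset ℤ := (Finset.range N).image fun j : ℕ => (j : ℤ) + 1
  obtain ⟨a, ha_support, ha_norm, ha_pairing⟩ := exists_sum_mul_eq_rpow_sum_abs_rpow hpq gaps
    fun m => truncatedSum s κ c (kk (m - 1)) - truncatedSum s κ c (kk m)
  refine ⟨kk, a, hkk, ha_norm, ?_⟩
  rw [sum_mul_linCoeff hkk.monotone ha_support, ha_pairing, variationAlong,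
    Finset.sum_image fun i _ j _ hij => by simpa using hij]
  have kk_succ (j : ℕ) : kk (j + 1) = k (j + 1) := mod_cast hkk_eq (j + 1)
  simp only [add_sub_cancel_right, hkk_eq, kk_succ, abs_sub_comm]

theorem linearization_of_variation_general {ι : Type*} {r : ℝ} (hr : 1 < r) (s : Finset ι)
    (κ : ι → ℤ) (c : ι → ℝ) :
    ∃ (k : ℤ → ℤ) (a : ℤ → ℝ), StrictMono k ∧
      (∀ t : Finset ℤ, ∑ j ∈ t, |a j| ^ (r / (r - 1)) ≤ 1) ∧
      0 ≤ ∑ i ∈ s, c i * linCoeff k a (κ i) ∧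
      varNorm r univ (truncatedSum s κ c) =
        ENNReal.ofReal (∑ i ∈ s, c i * linCoeff k a (κ i)) := by
  obtain ⟨N, k, hk, hmax⟩ := exists_varNorm_truncatedSum_eq (zero_lt_one.trans hr) s κ c
  obtain ⟨kk, a, hkk, ha, hsum⟩ := exists_sum_mul_linCoeff_eq_variationAlong
    (Real.HolderConjugate.conjExponent hr) s κ c hk N
  exact ⟨kk, a, hkk, ha, (variationAlong_nonneg r _ k N).trans_eq hsum.symm,
    hmax.trans (congrArg ENNReal.ofReal hsum.symm)⟩

/-- **Equation (2.2) (linearization of the variation norm).** For `r > 2` with conjugate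
exponent `r' = r/(r-1)`, a finite collection of quartiles, integrable `f₁, f₂`, and
`x ∈ [0,∞)`, there are a strictly increasing `(k_j)_{j∈ℤ}` and `(a_j)_{j∈ℤ}` with
`∑_j |a_j|^{r'} ≤ 1` such that, with `a_P` as in the context,
`∑_P |I_P|^{-1/2} ⟨f₁,φ_{P_1}⟩⟨f₂,φ_{P_2}⟩ φ_{P_3}(x) a_P
  ≥ (1/2) ‖∑_{|I_P| ≥ 2^k} |I_P|^{-1/2} ⟨f₁,φ_{P_1}⟩⟨f₂,φ_{P_2}⟩ φ_{P_3}(x)‖_{V^r_k}`. -/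
theorem linearization_of_variation (r : ℝ) (hr : 2 < r) (Ps : Finset Quartile)
    (f1 f2 : ℝ → ℝ) (h1 : Integrable f1 mu0) (h2 : Integrable f2 mu0)
    (x : ℝ) (hx : 0 ≤ x) :
    ∃ (k : ℤ → ℤ) (a : ℤ → ℝ), StrictMono k ∧
      (∀ s : Finset ℤ, ∑ j ∈ s, |a j| ^ (r / (r - 1)) ≤ 1) ∧
      varNorm r Set.univ (fun m =>
          ∑ P ∈ Ps.filter fun P => m ≤ P.I.k,
            P.I.len ^ (-(1 : ℝ) / 2) * (innerF f1 (P.wp 0) * innerF f2 (P.wp 1) * P.wp 2 x))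
        ≤ ENNReal.ofReal (2 * ∑ P ∈ Ps,
            P.I.len ^ (-(1 : ℝ) / 2) * (innerF f1 (P.wp 0) * innerF f2 (P.wp 1) * P.wp 2 x *
              linCoeff k a P.I.k)) := by
  obtain ⟨k, a, hk, ha, hnonneg, heq⟩ := linearization_of_variation_general
    (one_lt_two.trans hr) Ps (fun P => P.I.k) fun P =>
      P.I.len ^ (-(1 : ℝ) / 2) * (innerF f1 (P.wp 0) * innerF f2 (P.wp 1) * P.wp 2 x)
  refine ⟨k, a, hk, ha, heq.trans_le (ENNReal.ofReal_le_ofReal ?_)⟩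
  simp only [mul_assoc] at hnonneg ⊢
  exact le_mul_of_one_le_left hnonneg one_le_two
end
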